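/- arXiv:2210.16658 — 3 statements merged into one kernel-verified Lean document; each statement's English description precedes it below -/
import Mathlib

section
/- Let d ≥ K, λ_W > 0, λ_H > 0 and set c := √(λ_H λ_W). If c ≤ 1, then any global minimizer (W*, H*) of g satisfies: (i) within each class all feature columns coincide, i.e. h*_{k,1} = … = h*_{k,n} =: h̄*_k for every k ∈ [K]; (ii) ‖h̄*_1‖₂² = … = ‖h̄*_K‖₂² = ρ, where ρ := (1 − c)√(λ_W/λ_H); (iii) the Gram matrix [h̄*_1, …, h̄*_K]ᵀ[h̄*_1, …, h̄*_K] equals ρ I_K; and (iv) the k-th row of W* equals √(λ_H/λ_W) · (h̄*_k)ᵀ for every k ∈ [K]. -/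
open Matrix Filter
open scoped BigOperators

noncomputable section

variable {K n d : ℕ}

/-- The one-hot label matrix `Y = I_K ⊗ 1_nᵀ`: columns are indexed by class/sample pairs. -/
def Ymat (K n : ℕ) : Matrix (Fin K) (Fin K × Fin n) ℝ :=
  Matrix.of fun k p => if p.1 = k then 1 else 0

/-- Squared Frobenius norm. -/
def frobSq {m p : Type*} [Fintype m] [Fintype p] (M : Matrix m p ℝ) : ℝ :=
  ∑ i, ∑ j, (M i j) ^ 2

/-- Frobenius norm. -/
def frobNorm {m p : Type*} [Fintype m] [Fintype p] (M : Matrix m p ℝ) : ℝ :=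
  Real.sqrt (frobSq M)

/-- The unconstrained-features objective `g`. -/
def g (lW lH : ℝ) (W : Matrix (Fin K) (Fin d) ℝ)
    (H : Matrix (Fin d) (Fin K × Fin n) ℝ) : ℝ :=
  (1 / (2 * (K : ℝ) * n)) * frobSq (W * H - Ymat K n) +
    (lW / (2 * (K : ℝ))) * frobSq W + (lH / (2 * (K : ℝ) * n)) * frobSq H

/-- Class means. -/
def classMean (H : Matrix (Fin d) (Fin K × Fin n) ℝ) (k : Fin K) : Fin d → ℝ :=
  fun a => (1 / (n : ℝ)) * ∑ i, H a (k, i)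

/-- Global mean. -/
def globalMean (H : Matrix (Fin d) (Fin K × Fin n) ℝ) : Fin d → ℝ :=
  fun a => (1 / ((K : ℝ) * n)) * ∑ p, H a p

/-- Matrix of class means `H̄ ∈ ℝ^{d×K}`. -/
def Hbar (H : Matrix (Fin d) (Fin K × Fin n) ℝ) : Matrix (Fin d) (Fin K) ℝ :=
  Matrix.of fun a k => classMean H k a

/-- `H̄ ⊗ 1_nᵀ`: the matrix whose n columns of class k all equal the class mean. -/
def HbarSpread (H : Matrix (Fin d) (Fin K × Fin n) ℝ) :
    Matrix (Fin d) (Fin K × Fin n) ℝ :=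
  Matrix.of fun a p => classMean H p.1 a

/-- Within-class covariance. -/
def SigmaW (H : Matrix (Fin d) (Fin K × Fin n) ℝ) : Matrix (Fin d) (Fin d) ℝ :=
  Matrix.of fun a b =>
    (1 / ((K : ℝ) * n)) * ∑ p : Fin K × Fin n,
      (H a p - classMean H p.1 a) * (H b p - classMean H p.1 b)

/-- Between-class covariance. -/
def SigmaB (H : Matrix (Fin d) (Fin K × Fin n) ℝ) : Matrix (Fin d) (Fin d) ℝ :=
  Matrix.of fun a b =>
    (1 / (K : ℝ)) * ∑ k : Fin K,
      (classMean H k a - globalMean H a) * (classMean H k b - globalMean H b)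

/-- Non-centered total covariance. -/
def SigmaTtil (H : Matrix (Fin d) (Fin K × Fin n) ℝ) : Matrix (Fin d) (Fin d) ℝ :=
  (1 / ((K : ℝ) * n)) • (H * Hᵀ)

/-- Non-centered between-class covariance. -/
def SigmaBtil (H : Matrix (Fin d) (Fin K × Fin n) ℝ) : Matrix (Fin d) (Fin d) ℝ :=
  Matrix.of fun a b => (1 / (K : ℝ)) * ∑ k : Fin K, classMean H k a * classMean H k b

/-- The closed-form optimal last-layer weights `W*(H)`. -/
def Wstar (lW : ℝ) (H : Matrix (Fin d) (Fin K × Fin n) ℝ) :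
    Matrix (Fin K) (Fin d) ℝ :=
  Ymat K n * Hᵀ * (H * Hᵀ + ((n : ℝ) * lW) • (1 : Matrix (Fin d) (Fin d) ℝ))⁻¹

/-- The central-path loss `L(H)`. -/
def Lcp (lW lH : ℝ) (H : Matrix (Fin d) (Fin K × Fin n) ℝ) : ℝ :=
  (1 / (2 * (K : ℝ) * n)) * frobSq (Wstar lW H * H - Ymat K n) +
    (lW / (2 * (K : ℝ))) * frobSq (Wstar lW H) +
    (lH / (2 * (K : ℝ) * n)) * frobSq H

/-- `A(H) = Σ̃_T(H) + (λ_W/K) I`. -/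
def Amat (lW : ℝ) (H : Matrix (Fin d) (Fin K × Fin n) ℝ) : Matrix (Fin d) (Fin d) ℝ :=
  SigmaTtil H + (lW / (K : ℝ)) • 1

/-- The gradient of the central-path loss w.r.t. the Frobenius inner product. -/
def gradL (lW lH : ℝ) (H : Matrix (Fin d) (Fin K × Fin n) ℝ) :
    Matrix (Fin d) (Fin K × Fin n) ℝ :=
  (1 / ((K : ℝ) ^ 2 * n)) •
    ((Amat lW H)⁻¹ * (H - HbarSpread H)
      - (Amat lW H)⁻¹ * (SigmaW H + (lW / (K : ℝ)) • 1) * (Amat lW H)⁻¹ * H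
      + (lH * (K : ℝ)) • H)

/-- NC1 metric. -/
def NC1til (H : Matrix (Fin d) (Fin K × Fin n) ℝ) : ℝ :=
  (SigmaW H).trace / (SigmaB H).trace

/-!
Write `p = √λ_W`, `q = √λ_H`, and let `H_i` be the `d × K` matrix formed by the `i`-th sample of
each class, so that the label block of sample `i` is the identity. Expanding squares gives
`‖W H_i - 1‖² + p²‖W‖² + q²‖H_i‖² = ‖p W - q H_iᵀ‖² + ‖W H_i - (1 - pq) 1‖² + K (1 - (1 - pq)²)`,
because on either side the cross terms sum to `-2 tr (W H_i)`. Averaging over `i`, the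
objective is a constant plus a nonnegative excess. When `pq ≤ 1` and `K ≤ d` the excess can be made
zero with `W` and `H_iᵀ` multiples of a matrix with orthonormal rows, so a minimizer must satisfy
`p W = q H_iᵀ` and `W H_i = (1 - pq) 1` for every `i`, which is neural collapse.
-/

section FrobeniusNorm

variable {m ι : Type*} [Fintype m] [Fintype ι]

lemma frobSq_eq_trace_transpose_mul_self (M : Matrix m ι ℝ) : frobSq M = (Mᵀ * M).trace := by
  simp only [frobSq, trace, diag_apply, mul_apply, transpose_apply, ← sq]
  exact Finset.sum_comm

lemma frobSq_nonneg (M : Matrix m ι ℝ) : 0 ≤ frobSq M :=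
  Finset.sum_nonneg fun _ _ => Finset.sum_nonneg fun _ _ => sq_nonneg _

lemma frobSq_eq_zero_iff {M : Matrix m ι ℝ} : frobSq M = 0 ↔ M = 0 := by
  rw [frobSq_eq_trace_transpose_mul_self, ← conjTranspose_eq_transpose_of_trivial,
    trace_conjTranspose_mul_self_eq_zero_iff]

lemma frobSq_transpose (M : Matrix m ι ℝ) : frobSq Mᵀ = frobSq M :=
  Finset.sum_comm

lemma frobSq_smul (c : ℝ) (M : Matrix m ι ℝ) : frobSq (c • M) = c ^ 2 * frobSq M := by
  simp only [frobSq, Matrix.smul_apply, smul_eq_mul, mul_pow, Finset.mul_sum]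

lemma frobSq_one [DecidableEq m] : frobSq (1 : Matrix m m ℝ) = Fintype.card m := by
  rw [frobSq_eq_trace_transpose_mul_self, transpose_one, one_mul, trace_one]

lemma frobSq_sub (A B : Matrix m ι ℝ) :
    frobSq (A - B) = frobSq A - 2 * (Aᵀ * B).trace + frobSq B := by
  have hBA : (Bᵀ * A).trace = (Aᵀ * B).trace := by
    rw [← trace_transpose, transpose_mul, transpose_transpose]
  simp only [frobSq_eq_trace_transpose_mul_self, transpose_sub, Matrix.sub_mul, Matrix.mul_sub,
    trace_sub, hBA]
  ring

lemma frobSq_mul_sub_one_add_regularizer [DecidableEq m] (p q : ℝ) (W : Matrix m ι ℝ)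
    (B : Matrix ι m ℝ) :
    frobSq (W * B - 1) + p ^ 2 * frobSq W + q ^ 2 * frobSq B =
      frobSq (p • W - q • Bᵀ) + frobSq (W * B - (1 - p * q) • (1 : Matrix m m ℝ)) +
        Fintype.card m * (1 - (1 - p * q) ^ 2) := by
  have hcross : (Wᵀ * Bᵀ).trace = (W * B).trace := by
    rw [← transpose_mul, trace_transpose, trace_mul_comm]
  simp only [frobSq_sub, frobSq_smul, frobSq_transpose, frobSq_one, transpose_smul, smul_mul,
    Matrix.mul_smul, trace_smul, Matrix.mul_one, trace_transpose, hcross, smul_eq_mul]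
  ring

end FrobeniusNorm

lemma exists_mul_transpose_eq_one_of_card_le {m ι R : Type*} [Fintype m] [Fintype ι]
    [DecidableEq m] [NonAssocSemiring R] (h : Fintype.card m ≤ Fintype.card ι) :
    ∃ E : Matrix m ι R, E * Eᵀ = 1 := by
  classical
  obtain ⟨f⟩ := Function.Embedding.nonempty_of_card_le h
  refine ⟨(1 : Matrix ι ι R).submatrix f id, ?_⟩
  rw [transpose_submatrix, transpose_one, ← submatrix_mul _ _ _ _ _ Function.bijective_id, one_mul,
    submatrix_one _ f.injective]

section SampleBlock

/-- The block `H_i` of a class-organized matrix: its `k`-th column is the `i`-th sample of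
class `k`. It reduces the objective to a sum over samples of problems with square labels. -/
def sampleBlock {α κ ν R : Type*} (H : Matrix α (κ × ν) R) (i : ν) : Matrix α κ R :=
  H.submatrix id fun k => (k, i)

lemma sampleBlock_mul_sub_Ymat (W : Matrix (Fin K) (Fin d) ℝ)
    (H : Matrix (Fin d) (Fin K × Fin n) ℝ) (i : Fin n) :
    sampleBlock (W * H - Ymat K n) i = W * sampleBlock H i - 1 := by
  ext k l
  simp [sampleBlock, Ymat, mul_apply, one_apply, eq_comm]

lemma frobSq_eq_sum_frobSq_sampleBlock {α κ ν : Type*} [Fintype α] [Fintype κ] [Fintype ν]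
    (H : Matrix α (κ × ν) ℝ) : frobSq H = ∑ i, frobSq (sampleBlock H i) := by
  simp only [frobSq, Fintype.sum_prod_type_right]
  exact Finset.sum_comm

lemma Hbar_eq_of_forall_sampleBlock_eq {H : Matrix (Fin d) (Fin K × Fin n) ℝ}
    {B : Matrix (Fin d) (Fin K) ℝ} (hn : n ≠ 0) (h : ∀ i, sampleBlock H i = B) : Hbar H = B := by
  ext a k
  have hentry (i : Fin n) : H a (k, i) = B a k := congr_fun₂ (h i) a k
  simp [Hbar, classMean, hentry, hn]

end SampleBlock

/-- The amount by which `2 K n · g (p ^ 2) (q ^ 2)` exceeds its lower bound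
`K n (1 - (1 - p q) ^ 2)`, written as a sum of squares. -/
def ufmExcess (p q : ℝ) (W : Matrix (Fin K) (Fin d) ℝ)
    (H : Matrix (Fin d) (Fin K × Fin n) ℝ) : ℝ :=
  ∑ i, (frobSq (p • W - q • (sampleBlock H i)ᵀ) +
    frobSq (W * sampleBlock H i - (1 - p * q) • (1 : Matrix (Fin K) (Fin K) ℝ)))

/-- Neural collapse of `(W, H)` for the regularization parameters `p = √λ_W` and `q = √λ_H`,
expressed sample by sample: weights and features are balanced, and the predictions are the labels
shrunk by the factor `1 - pq`. -/
structure IsCollapsed (p q : ℝ) (W : Matrix (Fin K) (Fin d) ℝ)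
    (H : Matrix (Fin d) (Fin K × Fin n) ℝ) : Prop where
  balanced : ∀ i, p • W = q • (sampleBlock H i)ᵀ
  mul_sampleBlock : ∀ i, W * sampleBlock H i = (1 - p * q) • (1 : Matrix (Fin K) (Fin K) ℝ)

section Minimizers

variable {p q : ℝ} {W : Matrix (Fin K) (Fin d) ℝ} {H : Matrix (Fin d) (Fin K × Fin n) ℝ}

lemma g_sq_sq_eq_ufmExcess_add (hK : K ≠ 0) (hn : n ≠ 0) (p q : ℝ) (W : Matrix (Fin K) (Fin d) ℝ)
    (H : Matrix (Fin d) (Fin K × Fin n) ℝ) :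
    g (p ^ 2) (q ^ 2) W H =
      1 / (2 * (K : ℝ) * n) * ufmExcess p q W H + (1 - (1 - p * q) ^ 2) / 2 := by
  have hsum : frobSq (W * H - Ymat K n) + n * (p ^ 2 * frobSq W) + q ^ 2 * frobSq H =
      ufmExcess p q W H + n * (K * (1 - (1 - p * q) ^ 2)) := by
    calc
      _ = ∑ i, (frobSq (W * sampleBlock H i - 1) + p ^ 2 * frobSq W +
            q ^ 2 * frobSq (sampleBlock H i)) := by
        simp [frobSq_eq_sum_frobSq_sampleBlock (W * H - Ymat K n),
          frobSq_eq_sum_frobSq_sampleBlock H, sampleBlock_mul_sub_Ymat, Finset.sum_add_distrib,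
          Finset.mul_sum]
      _ = _ := by
        simp [frobSq_mul_sub_one_add_regularizer, ufmExcess, Finset.sum_add_distrib]
  rw [g]
  field_simp
  linear_combination hsum

lemma ufmExcess_nonneg (p q : ℝ) (W : Matrix (Fin K) (Fin d) ℝ)
    (H : Matrix (Fin d) (Fin K × Fin n) ℝ) : 0 ≤ ufmExcess p q W H :=
  Finset.sum_nonneg fun _ _ => add_nonneg (frobSq_nonneg _) (frobSq_nonneg _)

lemma ufmExcess_eq_zero_iff : ufmExcess p q W H = 0 ↔ IsCollapsed p q W H := by
  rw [ufmExcess, Fintype.sum_eq_zero_iff_of_nonneg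
    fun _ => add_nonneg (frobSq_nonneg _) (frobSq_nonneg _)]
  simp only [funext_iff, Pi.zero_apply,
    add_eq_zero_iff_of_nonneg (frobSq_nonneg _) (frobSq_nonneg _), frobSq_eq_zero_iff, sub_eq_zero,
    forall_and]
  exact ⟨fun h => ⟨h.1, h.2⟩, fun h => ⟨h.1, h.2⟩⟩

lemma exists_isCollapsed (n : ℕ) (hdK : K ≤ d) (hp : 0 < p) (hq : 0 < q) (hpq : p * q ≤ 1) :
    ∃ (W : Matrix (Fin K) (Fin d) ℝ) (H : Matrix (Fin d) (Fin K × Fin n) ℝ),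
      IsCollapsed p q W H := by
  obtain ⟨E, hE⟩ := exists_mul_transpose_eq_one_of_card_le (m := Fin K) (ι := Fin d) (R := ℝ)
    (by simpa using hdK)
  obtain ⟨w, hw⟩ : ∃ w : ℝ, w * w = (1 - p * q) * (q / p) :=
    ⟨√((1 - p * q) * (q / p)),
      Real.mul_self_sqrt (mul_nonneg (sub_nonneg.2 hpq) (by positivity))⟩
  refine ⟨w • E, ((p / q * w) • Eᵀ).submatrix id Prod.fst, fun i => ?_, fun i => ?_⟩
  · change p • w • E = q • ((p / q * w) • Eᵀ)ᵀ
    rw [transpose_smul, transpose_transpose, smul_smul, smul_smul]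
    congr 1
    field_simp
  · change w • E * (p / q * w) • Eᵀ = (1 - p * q) • 1
    rw [smul_mul, Matrix.mul_smul, hE, smul_smul]
    congr 1
    calc
      w * (p / q * w) = p / q * (w * w) := by ring
      _ = 1 - p * q := by rw [hw]; field_simp

lemma isCollapsed_of_forall_g_le (hK : 0 < K) (hn : 0 < n) (hdK : K ≤ d) (hp : 0 < p) (hq : 0 < q)
    (hpq : p * q ≤ 1)
    (hmin : ∀ (W' : Matrix (Fin K) (Fin d) ℝ) (H' : Matrix (Fin d) (Fin K × Fin n) ℝ),
      g (p ^ 2) (q ^ 2) W H ≤ g (p ^ 2) (q ^ 2) W' H') :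
    IsCollapsed p q W H := by
  obtain ⟨W₀, H₀, hcollapsed⟩ := exists_isCollapsed n hdK hp hq hpq
  have hle : ufmExcess p q W H ≤ ufmExcess p q W₀ H₀ := by
    have hg := hmin W₀ H₀
    rw [g_sq_sq_eq_ufmExcess_add hK.ne' hn.ne', g_sq_sq_eq_ufmExcess_add hK.ne' hn.ne',
      add_le_add_iff_right] at hg
    exact le_of_mul_le_mul_left hg (by positivity)
  rw [ufmExcess_eq_zero_iff.2 hcollapsed] at hle
  exact ufmExcess_eq_zero_iff.1 (hle.antisymm (ufmExcess_nonneg p q W H))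

end Minimizers

namespace IsCollapsed

variable {p q : ℝ} {W : Matrix (Fin K) (Fin d) ℝ} {H : Matrix (Fin d) (Fin K × Fin n) ℝ}

lemma sampleBlock_eq (h : IsCollapsed p q W H) (hq : q ≠ 0) (i : Fin n) :
    sampleBlock H i = (p / q) • Wᵀ := by
  have hbal : q • sampleBlock H i = p • Wᵀ := by
    simpa using (congr_arg transpose (h.balanced i)).symm
  rw [div_eq_inv_mul, mul_smul, ← hbal, inv_smul_smul₀ hq]

lemma Hbar_eq (h : IsCollapsed p q W H) (hn : n ≠ 0) (hq : q ≠ 0) : Hbar H = (p / q) • Wᵀ :=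
  Hbar_eq_of_forall_sampleBlock_eq hn (h.sampleBlock_eq hq)

lemma sampleBlock_eq_Hbar (h : IsCollapsed p q W H) (hn : n ≠ 0) (hq : q ≠ 0) (i : Fin n) :
    sampleBlock H i = Hbar H := by
  rw [h.sampleBlock_eq hq, h.Hbar_eq hn hq]

lemma weights_eq (h : IsCollapsed p q W H) (hn : n ≠ 0) (hp : p ≠ 0) (hq : q ≠ 0) :
    W = (q / p) • (Hbar H)ᵀ := by
  rw [h.Hbar_eq hn hq, transpose_smul, transpose_transpose, smul_smul, ← inv_div p q,
    inv_mul_cancel₀ (div_ne_zero hp hq), one_smul]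

lemma gram_Hbar_eq (h : IsCollapsed p q W H) (hn : n ≠ 0) (hq : q ≠ 0) :
    (Hbar H)ᵀ * Hbar H = ((1 - p * q) * (p / q)) • (1 : Matrix (Fin K) (Fin K) ℝ) := by
  have htranspose : (Hbar H)ᵀ = (p / q) • W := by
    rw [h.Hbar_eq hn hq, transpose_smul, transpose_transpose]
  have hpred : W * Hbar H = (1 - p * q) • (1 : Matrix (Fin K) (Fin K) ℝ) := by
    let i : Fin n := ⟨0, Nat.pos_of_ne_zero hn⟩
    rw [← h.sampleBlock_eq_Hbar hn hq i, h.mul_sampleBlock]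
  rw [htranspose, smul_mul, hpred, smul_smul, mul_comm]

end IsCollapsed

/-- Theorem 3.1 of Tirer-Bruna, collapse of global minimizers of the UFM:
if `c = √(λ_H λ_W) ≤ 1`, any global minimizer `(W*, H*)` of `g` has collapsed features:
within-class features coincide with the class means, the class means have common squared
norm `ρ = (1-c)√(λ_W/λ_H)`, their Gram matrix is `ρ I_K`, and `W*`'s rows are
`√(λ_H/λ_W)` times the class means. -/
theorem neural_collapse_of_ufm_minimizer
    (K n d : ℕ) (hK : 0 < K) (hn : 0 < n) (hdK : K ≤ d)
    (lW lH : ℝ) (hlW : 0 < lW) (hlH : 0 < lH)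
    (hc : Real.sqrt (lH * lW) ≤ 1)
    (Ws : Matrix (Fin K) (Fin d) ℝ) (Hs : Matrix (Fin d) (Fin K × Fin n) ℝ)
    (hmin : ∀ (W : Matrix (Fin K) (Fin d) ℝ) (H : Matrix (Fin d) (Fin K × Fin n) ℝ),
      g lW lH Ws Hs ≤ g lW lH W H) :
    (∀ (k : Fin K) (i : Fin n) (a : Fin d), Hs a (k, i) = classMean Hs k a) ∧
    (∀ k : Fin K, ∑ a, (classMean Hs k a) ^ 2
        = (1 - Real.sqrt (lH * lW)) * Real.sqrt (lW / lH)) ∧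
    (∀ k k' : Fin K, ∑ a, classMean Hs k a * classMean Hs k' a
        = if k = k' then (1 - Real.sqrt (lH * lW)) * Real.sqrt (lW / lH) else 0) ∧
    (∀ (k : Fin K) (a : Fin d), Ws k a = Real.sqrt (lH / lW) * classMean Hs k a) := by
  have hp : 0 < √lW := Real.sqrt_pos.2 hlW
  have hq : 0 < √lH := Real.sqrt_pos.2 hlH
  rw [Real.sqrt_mul hlH.le, mul_comm] at hc
  have hcollapsed : IsCollapsed (√lW) (√lH) Ws Hs :=
    isCollapsed_of_forall_g_le hK hn hdK hp hq hc (by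
      simpa only [Real.sq_sqrt hlW.le, Real.sq_sqrt hlH.le] using hmin)
  rw [Real.sqrt_mul hlH.le, Real.sqrt_div hlW.le, Real.sqrt_div hlH.le, mul_comm (√lH)]
  have hgram (k k' : Fin K) : ∑ a, classMean Hs k a * classMean Hs k' a =
      if k = k' then (1 - √lW * √lH) * (√lW / √lH) else 0 := by
    simpa only [mul_apply, transpose_apply, Hbar, of_apply, Matrix.smul_apply, one_apply,
      smul_eq_mul, mul_ite, mul_one, mul_zero] using
      congr_fun₂ (hcollapsed.gram_Hbar_eq hn.ne' hq.ne') k k'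
  refine ⟨fun k i a => ?features_eq_mean, fun k => ?norm_sq, hgram, fun k a => ?weights⟩
  case features_eq_mean => exact congr_fun₂ (hcollapsed.sampleBlock_eq_Hbar hn.ne' hq.ne' i) a k
  case norm_sq => simpa only [sq, if_true] using hgram k k
  case weights => exact congr_fun₂ (hcollapsed.weights_eq hn.ne' hp.ne' hq.ne') k a

end
end

section
/- The central-path loss L is differentiable at every H ∈ ℝ^{d×Kn}, and its gradient with respect to the Frobenius inner product is ∇L(H) = (1/(K²n)) [ A^{-1}(H − H̄ ⊗ 1_nᵀ) − A^{-1}(Σ_W(H) + (λ_W/K) I_d) A^{-1} H + λ_H K H ], where A := Σ̃_T(H) + (λ_W/K) I_d, H̄ = [h̄_1, …, h̄_K] ∈ ℝ^{d×K} is the matrix of class means, and H̄ ⊗ 1_nᵀ is the matrix whose n columns of class k all equal h̄_k. -/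
open Matrix Filter
open scoped BigOperators

noncomputable section

variable {K n d : ℕ}

attribute [local instance] Matrix.normedAddCommGroup Matrix.normedSpace

/-- The Frobenius inner product against a fixed matrix `G`, as a linear functional. -/
def frobInner {m p : Type*} [Fintype m] [Fintype p] (G : Matrix m p ℝ) :
    Matrix m p ℝ →ₗ[ℝ] ℝ where
  toFun V := ∑ i, ∑ j, G i j * V i j
  map_add' x y := by
    simp only [Matrix.add_apply, mul_add, Finset.sum_add_distrib]
  map_smul' c x := by
    simp only [Matrix.smul_apply, smul_eq_mul, RingHom.id_apply, Finset.mul_sum]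
    ring_nf
    simp [mul_comm, mul_left_comm]


/-! This is the envelope theorem. The objective satisfies `L(H) = g(W*(H), H)`, and the normal
equations `W*(H) A = (1/(Kn)) Y Hᵀ` say that `W*(H)` is a critical point of `g(·, H)`. Hence the
derivative of `W*` does not contribute, and `∇L(H)` is the partial gradient
`(1/(Kn)) (Wᵀ (W H - Y) + λ_H H)` of `g` in `H`, taken at `W = W*(H)`. It takes the asserted form
once `Wᵀ Y` and `Wᵀ W` are expressed through `A⁻¹` using `H Yᵀ Y = n (H̄ ⊗ 1ᵀ)` and
`Σ_W + (λ_W/K) I = A - (1/(Kn)) (H̄ ⊗ 1ᵀ) Hᵀ`. -/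

section Calculus

variable {𝕜 : Type*} [NontriviallyNormedField 𝕜]

lemma hasFDerivAt_comp_graph_of_stationary {E F G : Type*} [NormedAddCommGroup E]
    [NormedSpace 𝕜 E] [NormedAddCommGroup F] [NormedSpace 𝕜 F] [NormedAddCommGroup G]
    [NormedSpace 𝕜 G] {f : F × E → G} {w : E → F} {f' : E →L[𝕜] G} {x : E}
    (hf : HasFDerivAt f (ContinuousLinearMap.coprod 0 f') (w x, x))
    (hw : DifferentiableAt 𝕜 w x) : HasFDerivAt (fun y ↦ f (w y, y)) f' x := by
  have hgraph := hw.hasFDerivAt.prodMk (hasFDerivAt_id x)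
  refine (HasFDerivAt.comp (f := fun y ↦ (w y, y)) x hf hgraph).congr_fderiv ?_
  ext v
  simp

variable [CompleteSpace 𝕜]

lemma differentiableAt_ringInverse_of_finiteDimensional {R : Type*} [NormedRing R]
    [NormedAlgebra 𝕜 R] [FiniteDimensional 𝕜 R] {x : R} (hx : IsUnit x) :
    DifferentiableAt 𝕜 (Ring.inverse : R → R) x :=
  have := FiniteDimensional.complete 𝕜 R
  differentiableAt_inverse hx

variable {l m n : Type*} [Finite l] [Fintype m] [Finite n]

-- Differentiability depends only on the topology, so any algebra norm on matrices will do.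
attribute [local instance] Matrix.linftyOpNormedRing Matrix.linftyOpNormedAlgebra in
lemma differentiableAt_nonsing_inv [DecidableEq m] {A : Matrix m m 𝕜} (hA : IsUnit A) :
    DifferentiableAt 𝕜 (fun B : Matrix m m 𝕜 ↦ B⁻¹) A := by
  simp only [nonsing_inv_eq_ringInverse]
  exact differentiableAt_ringInverse_of_finiteDimensional hA

lemma hasFDerivAt_matrix_mul (p : Matrix l m 𝕜 × Matrix m n 𝕜) :
    HasFDerivAt (fun q : Matrix l m 𝕜 × Matrix m n 𝕜 ↦ q.1 * q.2)
      (ContinuousLinearMap.coprod (mulRightLinearMap l 𝕜 p.2).toContinuousLinearMap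
        (mulLeftLinearMap n 𝕜 p.1).toContinuousLinearMap) p := by
  cases nonempty_fintype l
  cases nonempty_fintype n
  have hmul : IsBilinearMap 𝕜 fun (A : Matrix l m 𝕜) (B : Matrix m n 𝕜) ↦ A * B :=
    { add_left := Matrix.add_mul
      smul_left := Matrix.smul_mul
      add_right := Matrix.mul_add
      smul_right := fun c A B ↦ Matrix.mul_smul A c B }
  refine (hmul.toContinuousBilinearMap.hasFDerivAt_of_bilinear (hasFDerivAt_fst (p := p))
    (hasFDerivAt_snd (p := p))).congr_fderiv ?_
  exact ContinuousLinearMap.ext fun v ↦ add_comm (p.1 * v.2) (v.1 * p.2)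

lemma differentiableAt_matrix_mul {E : Type*} [NormedAddCommGroup E] [NormedSpace 𝕜 E]
    {A : E → Matrix l m 𝕜} {B : E → Matrix m n 𝕜} {x : E} (hA : DifferentiableAt 𝕜 A x)
    (hB : DifferentiableAt 𝕜 B x) : DifferentiableAt 𝕜 (fun y ↦ A y * B y) x := by
  cases nonempty_fintype l
  cases nonempty_fintype n
  exact DifferentiableAt.comp (f := fun y ↦ (A y, B y)) x
    (hasFDerivAt_matrix_mul (A x, B x)).differentiableAt (hA.prodMk hB)

lemma differentiable_transpose {m : Type*} [Finite m] :
    Differentiable 𝕜 fun A : Matrix m n 𝕜 ↦ Aᵀ := by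
  cases nonempty_fintype m
  cases nonempty_fintype n
  exact (transposeLinearEquiv m n 𝕜 𝕜).toLinearMap.toContinuousLinearMap.differentiable

end Calculus

section Frobenius

variable {m p q : Type*} [Fintype m] [Fintype p] [Fintype q]

lemma frobInner_eq_trace (A B : Matrix m p ℝ) : frobInner A B = (A * Bᵀ).trace :=
  rfl

lemma frobInner_comm (A B : Matrix m p ℝ) : frobInner A B = frobInner B A := by
  rw [frobInner_eq_trace, ← trace_transpose, transpose_mul, transpose_transpose,
    ← frobInner_eq_trace]

lemma frobInner_zero_left : frobInner (0 : Matrix m p ℝ) = 0 := by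
  ext1 B
  simp [frobInner_eq_trace]

lemma frobInner_add_left (A B : Matrix m p ℝ) :
    frobInner (A + B) = frobInner A + frobInner B := by
  ext1 C
  simp only [frobInner_eq_trace, Matrix.add_mul, trace_add, LinearMap.add_apply]

lemma frobInner_smul_left (c : ℝ) (A : Matrix m p ℝ) :
    frobInner (c • A) = c • frobInner A := by
  ext1 B
  simp only [frobInner_eq_trace, Matrix.smul_mul, trace_smul, LinearMap.smul_apply]

lemma frobInner_mul_left (A : Matrix m p ℝ) (B : Matrix m q ℝ) (C : Matrix q p ℝ) :
    frobInner A (B * C) = frobInner (Bᵀ * A) C := by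
  simp only [frobInner_eq_trace, transpose_mul, Matrix.mul_assoc, trace_mul_comm Bᵀ]

lemma frobInner_mul_right (A : Matrix m p ℝ) (B : Matrix m q ℝ) (C : Matrix q p ℝ) :
    frobInner A (B * C) = frobInner (A * Cᵀ) B := by
  simp only [frobInner_eq_trace, transpose_mul, Matrix.mul_assoc]

lemma frobSq_eq_frobInner (A : Matrix m p ℝ) : frobSq A = frobInner A A := by
  simp only [frobSq, sq]
  rfl

lemma hasFDerivAt_frobSq (A : Matrix m p ℝ) :
    HasFDerivAt frobSq ((2 : ℝ) • frobInner A).toContinuousLinearMap A := by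
  have hinner : IsBilinearMap ℝ fun B C : Matrix m p ℝ ↦ frobInner B C :=
    { add_left := fun B C D ↦ by rw [frobInner_add_left, LinearMap.add_apply]
      smul_left := fun c B C ↦ by rw [frobInner_smul_left, LinearMap.smul_apply]
      add_right := fun B ↦ map_add (frobInner B)
      smul_right := fun c B ↦ map_smul (frobInner B) c }
  rw [funext frobSq_eq_frobInner]
  refine (hinner.toContinuousBilinearMap.hasFDerivAt_of_bilinear
    (hasFDerivAt_id A) (hasFDerivAt_id A)).congr_fderiv (ContinuousLinearMap.ext fun V ↦ ?_)
  change frobInner A V + frobInner V A = 2 * frobInner A V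
  rw [frobInner_comm V A, two_mul]

end Frobenius

section Objective

/-- The gradient of the objective `g` in its weight argument `W`. -/
def objGradW (lW : ℝ) (W : Matrix (Fin K) (Fin d) ℝ) (H : Matrix (Fin d) (Fin K × Fin n) ℝ) :
    Matrix (Fin K) (Fin d) ℝ :=
  (1 / ((K : ℝ) * n)) • ((W * H - Ymat K n) * Hᵀ) + (lW / (K : ℝ)) • W

/-- The gradient of the objective `g` in its feature argument `H`. -/
def objGradH (lH : ℝ) (W : Matrix (Fin K) (Fin d) ℝ) (H : Matrix (Fin d) (Fin K × Fin n) ℝ) :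
    Matrix (Fin d) (Fin K × Fin n) ℝ :=
  (1 / ((K : ℝ) * n)) • (Wᵀ * (W * H - Ymat K n) + lH • H)

lemma hasFDerivAt_g (lW lH : ℝ) (W : Matrix (Fin K) (Fin d) ℝ)
    (H : Matrix (Fin d) (Fin K × Fin n) ℝ) :
    HasFDerivAt (fun p : Matrix (Fin K) (Fin d) ℝ × Matrix (Fin d) (Fin K × Fin n) ℝ ↦
        g lW lH p.1 p.2)
      (ContinuousLinearMap.coprod (frobInner (objGradW lW W H)).toContinuousLinearMap
        (frobInner (objGradH lH W H)).toContinuousLinearMap) (W, H) := by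
  have hres := (hasFDerivAt_matrix_mul (W, H)).sub_const (Ymat K n)
  have hfit := ((hasFDerivAt_frobSq (W * H - Ymat K n)).comp (W, H) hres).const_mul
    (1 / (2 * (K : ℝ) * n))
  have hW := ((hasFDerivAt_frobSq W).comp (f := Prod.fst) (W, H) hasFDerivAt_fst).const_mul
    (lW / (2 * (K : ℝ)))
  have hH := ((hasFDerivAt_frobSq H).comp (f := Prod.snd) (W, H) hasFDerivAt_snd).const_mul
    (lH / (2 * (K : ℝ) * n))
  refine ((hfit.add hW).add hH).congr_fderiv (ContinuousLinearMap.ext fun v ↦ ?_)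
  set R := W * H - Ymat K n with hR
  calc 1 / (2 * (K : ℝ) * n) * (2 * frobInner R (v.1 * H + W * v.2))
        + lW / (2 * (K : ℝ)) * (2 * frobInner W v.1)
        + lH / (2 * (K : ℝ) * n) * (2 * frobInner H v.2)
      = frobInner (objGradW lW W H) v.1 + frobInner (objGradH lH W H) v.2 := by
        rw [map_add, frobInner_mul_right R v.1 H, frobInner_mul_left R W v.2, objGradW, objGradH]
        simp only [← hR, frobInner_add_left, frobInner_smul_left, LinearMap.add_apply,
          LinearMap.smul_apply, smul_eq_mul]
        ring

end Objective

section ClosedForm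

variable (lW lH : ℝ) (H : Matrix (Fin d) (Fin K × Fin n) ℝ)

lemma natCast_mul_classMean (k : Fin K) (a : Fin d) :
    n * classMean H k a = ∑ i, H a (k, i) := by
  rcases Nat.eq_zero_or_pos n with rfl | hn
  · simp
  · have : (n : ℝ) ≠ 0 := by positivity
    rw [classMean, ← mul_assoc, mul_one_div_cancel this, one_mul]

lemma mul_Ymat_transpose_mul_Ymat :
    H * (Ymat K n)ᵀ * Ymat K n = (n : ℝ) • HbarSpread H := by
  ext a p
  simp only [HbarSpread, Matrix.smul_apply, of_apply, smul_eq_mul, natCast_mul_classMean]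
  simp only [Matrix.mul_apply, Ymat, transpose_apply, of_apply, mul_ite, mul_one, mul_zero,
    Fintype.sum_prod_type, Finset.sum_ite_eq, Finset.mem_univ, if_true]
  rw [Finset.sum_comm]
  simp

lemma SigmaW_eq : SigmaW H = SigmaTtil H - (1 / ((K : ℝ) * n)) • (HbarSpread H * Hᵀ) := by
  rw [SigmaTtil, ← smul_sub]
  ext a b
  simp only [SigmaW, of_apply, Matrix.smul_apply, smul_eq_mul, Matrix.sub_apply, Matrix.mul_apply,
    HbarSpread, transpose_apply, Fintype.sum_prod_type, ← Finset.sum_sub_distrib]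
  congr! 2 with k
  calc ∑ i, (H a (k, i) - classMean H k a) * (H b (k, i) - classMean H k b)
      = ∑ i, (H a (k, i) * H b (k, i) - classMean H k a * H b (k, i))
        - ((∑ i, H a (k, i)) - n * classMean H k a) * classMean H k b := by
        simp only [sub_mul, mul_sub, Finset.sum_sub_distrib, ← Finset.sum_mul, ← Finset.mul_sum,
          Finset.sum_const, Finset.card_univ, Fintype.card_fin, nsmul_eq_mul]
    _ = ∑ i, (H a (k, i) * H b (k, i) - classMean H k a * H b (k, i)) := by
        rw [natCast_mul_classMean, sub_self, zero_mul, sub_zero]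

lemma Amat_isSymm : (Amat lW H).IsSymm := by
  simp [Amat, SigmaTtil, Matrix.IsSymm]

variable {lW H}

lemma posDef_Amat (hK : 0 < K) (hlW : 0 < lW) : (Amat lW H).PosDef := by
  have hcov : (SigmaTtil H).PosSemidef := by
    rw [SigmaTtil, ← conjTranspose_eq_transpose_of_trivial]
    exact (posSemidef_self_mul_conjTranspose H).smul (by positivity)
  have hridge : ((lW / (K : ℝ)) • (1 : Matrix (Fin d) (Fin d) ℝ)).PosDef :=
    PosDef.one.smul (by positivity)
  exact PosDef.posSemidef_add hcov hridge

lemma gram_add_smul_one_eq_smul_Amat (hK : K ≠ 0) (hn : n ≠ 0) :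
    H * Hᵀ + ((n : ℝ) * lW) • 1 = ((K : ℝ) * n) • Amat lW H := by
  rw [Amat, SigmaTtil, smul_add, smul_smul, smul_smul]
  match_scalars <;> field_simp

lemma Wstar_eq (hK : K ≠ 0) (hn : n ≠ 0) (hA : IsUnit (Amat lW H)) :
    Wstar lW H = (1 / ((K : ℝ) * n)) • (Ymat K n * Hᵀ * (Amat lW H)⁻¹) := by
  have hKn : (K : ℝ) * n ≠ 0 := by simp [hK, hn]
  rw [Wstar, gram_add_smul_one_eq_smul_Amat hK hn, one_div, ← Matrix.mul_smul]
  congr 1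
  exact inv_smul' (Amat lW H) (Units.mk0 _ hKn) ((isUnit_iff_isUnit_det _).mp hA)

lemma differentiableAt_Wstar (hK : K ≠ 0) (hn : n ≠ 0) (hA : IsUnit (Amat lW H)) :
    DifferentiableAt ℝ (Wstar lW) H := by
  have hKn : (K : ℝ) * n ≠ 0 := by simp [hK, hn]
  have hgram : IsUnit (H * Hᵀ + ((n : ℝ) * lW) • (1 : Matrix (Fin d) (Fin d) ℝ)) := by
    rw [gram_add_smul_one_eq_smul_Amat hK hn]
    exact hA.smul (Units.mk0 _ hKn)
  have htranspose := differentiable_transpose (𝕜 := ℝ) H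
  have hgram_diff := (differentiableAt_matrix_mul differentiableAt_id htranspose).add_const
    (((n : ℝ) * lW) • (1 : Matrix (Fin d) (Fin d) ℝ))
  exact differentiableAt_matrix_mul
    (differentiableAt_matrix_mul (differentiableAt_const (Ymat K n)) htranspose)
    (DifferentiableAt.comp H (differentiableAt_nonsing_inv hgram) hgram_diff)

lemma objGradW_Wstar (hK : K ≠ 0) (hn : n ≠ 0) (hA : IsUnit (Amat lW H)) :
    objGradW lW (Wstar lW H) H = 0 := by
  have hnormal : Wstar lW H * Amat lW H = (1 / ((K : ℝ) * n)) • (Ymat K n * Hᵀ) := by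
    rw [Wstar_eq hK hn hA, Matrix.smul_mul,
      nonsing_inv_mul_cancel_right _ _ ((isUnit_iff_isUnit_det _).mp hA)]
  calc objGradW lW (Wstar lW H) H
      = Wstar lW H * Amat lW H - (1 / ((K : ℝ) * n)) • (Ymat K n * Hᵀ) := by
        simp only [objGradW, Amat, SigmaTtil, Matrix.sub_mul, Matrix.mul_add, Matrix.mul_smul,
          Matrix.mul_one, Matrix.mul_assoc]
        module
    _ = 0 := by rw [hnormal, sub_self]

lemma Wstar_transpose_mul_Ymat (hK : K ≠ 0) (hn : n ≠ 0) (hA : IsUnit (Amat lW H)) :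
    (Wstar lW H)ᵀ * Ymat K n = (1 / (K : ℝ)) • ((Amat lW H)⁻¹ * HbarSpread H) := by
  rw [Wstar_eq hK hn hA, transpose_smul, transpose_mul, transpose_nonsing_inv, Amat_isSymm lW H,
    transpose_mul, transpose_transpose, Matrix.smul_mul, Matrix.mul_assoc,
    mul_Ymat_transpose_mul_Ymat, Matrix.mul_smul, smul_smul]
  congr 1
  field_simp

lemma Wstar_transpose_mul_Wstar (hK : K ≠ 0) (hn : n ≠ 0) (hA : IsUnit (Amat lW H)) :
    (K : ℝ) • ((Wstar lW H)ᵀ * Wstar lW H) =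
      (Amat lW H)⁻¹ - (Amat lW H)⁻¹ * (SigmaW H + (lW / (K : ℝ)) • 1) * (Amat lW H)⁻¹ := by
  have hcov : SigmaW H + (lW / (K : ℝ)) • 1 =
      Amat lW H - (1 / ((K : ℝ) * n)) • (HbarSpread H * Hᵀ) := by
    rw [SigmaW_eq, Amat, sub_add_eq_add_sub]
  have hAdet := (isUnit_iff_isUnit_det _).mp hA
  calc (K : ℝ) • ((Wstar lW H)ᵀ * Wstar lW H)
      = (K : ℝ) • (1 / ((K : ℝ) * n)) • (((Wstar lW H)ᵀ * Ymat K n) * Hᵀ * (Amat lW H)⁻¹) := by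
        nth_rw 2 [Wstar_eq hK hn hA]
        simp only [Matrix.mul_smul, Matrix.mul_assoc]
    _ = (1 / ((K : ℝ) * n)) • ((Amat lW H)⁻¹ * (HbarSpread H * Hᵀ) * (Amat lW H)⁻¹) := by
        rw [Wstar_transpose_mul_Ymat hK hn hA]
        simp only [Matrix.smul_mul, Matrix.mul_assoc]
        match_scalars
        field_simp
    _ = _ := by
        rw [hcov, Matrix.mul_sub, Matrix.sub_mul, nonsing_inv_mul _ hAdet, Matrix.one_mul,
          Matrix.mul_smul, Matrix.smul_mul, sub_sub_cancel]

lemma objGradH_Wstar (hK : K ≠ 0) (hn : n ≠ 0) (hA : IsUnit (Amat lW H)) :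
    objGradH lH (Wstar lW H) H = gradL lW lH H := by
  have hWW := Wstar_transpose_mul_Wstar hK hn hA
  have hWY := Wstar_transpose_mul_Ymat hK hn hA
  have hWWH : (Amat lW H)⁻¹ * (SigmaW H + (lW / (K : ℝ)) • 1) * (Amat lW H)⁻¹ * H =
      (Amat lW H)⁻¹ * H - (K : ℝ) • ((Wstar lW H)ᵀ * Wstar lW H * H) := by
    rw [← Matrix.smul_mul, hWW, Matrix.sub_mul, sub_sub_cancel]
  rw [gradL, hWWH, objGradH, Matrix.mul_sub, Matrix.mul_sub, hWY, Matrix.mul_assoc]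
  match_scalars <;> field_simp
  norm_num

theorem central_path_loss_gradient_general (hK : K ≠ 0) (hn : n ≠ 0) (hA : IsUnit (Amat lW H)) :
    HasFDerivAt (Lcp lW lH) (frobInner (gradL lW lH H)).toContinuousLinearMap H := by
  have hgrad := hasFDerivAt_g lW lH (Wstar lW H) H
  rw [objGradW_Wstar hK hn hA, frobInner_zero_left, map_zero,
    objGradH_Wstar lH hK hn hA] at hgrad
  exact hasFDerivAt_comp_graph_of_stationary hgrad (differentiableAt_Wstar hK hn hA)

end ClosedForm

/-- the central-path loss `L` is differentiable at every `H`, with gradient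
(w.r.t. the Frobenius inner product)
`∇L(H) = (1/(K²n))[A⁻¹(H − H̄⊗1ᵀ) − A⁻¹(Σ_W + (λ_W/K)I)A⁻¹H + λ_H K H]`,
where `A = Σ̃_T(H) + (λ_W/K)I`. -/
theorem central_path_loss_gradient
    (K n d : ℕ) (hK : 0 < K) (hn : 0 < n) (hdK : K ≤ d)
    (lW lH : ℝ) (hlW : 0 < lW) (hlH : 0 ≤ lH)
    (H : Matrix (Fin d) (Fin K × Fin n) ℝ) :
    HasFDerivAt (Lcp lW lH)
      ((frobInner (gradL lW lH H)).toContinuousLinearMap) H :=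
  central_path_loss_gradient_general lH hK.ne' hn.ne' (posDef_Amat hK hlW).isUnit

end
end

section
/- Let λ_W > 0, λ_H ≥ 0, fix H₀ ∈ ℝ^{d×Kn}, and set M := (1/(Kn))(3/λ_W + λ_H). For every β > KnM = 3/λ_W + λ_H, any global minimizer H_{1/β} of the map H ↦ L(H) + (β/(2Kn))‖H − H₀‖_F² satisfies ‖H_{1/β} − H₀‖_F ≤ ( β/(KnM) − 1 )^{-1} ‖H₀‖_F. In particular H_{1/β} → H₀ as β → ∞ (for any choice of global minimizers). -/
open Matrix Filter
open scoped BigOperators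

noncomputable section

variable {K n d : ℕ}

/-!
Since `W*(H)` is optimal for `H`, the quadratic `H ↦ ‖W H - Y‖² + λ_H ‖H‖² + β ‖H - H₀‖²` majorizes
the proximal objective for every `W`, up to scaling and an additive constant, and for `W = W*(Hm)`
the two agree at `Hm`. A local minimizer `Hm` of the objective is thus a local minimizer of that
quadratic, so with `R = Y - W Hm` we get `Wᵀ R = λ_H Hm + β (Hm - H₀)`. The normal equation
`R Hmᵀ = n λ_W W` and `Y Yᵀ = n I` yield `‖Wᵀ R‖² ≤ n ‖W‖² = λ_W⁻¹ ⟪Wᵀ R, Hm⟫`, so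
`‖Wᵀ R‖ ≤ λ_W⁻¹ ‖Hm‖`. Hence `β ‖Hm - H₀‖ ≤ (λ_W⁻¹ + |λ_H|) ‖Hm‖`, and the triangle inequality
concludes.
-/

section Prox

open scoped InnerProductSpace

variable {E F : Type*}

lemma norm_sub_le_inv_mul_of_mul_norm_sub_le [SeminormedAddCommGroup E] {x x₀ : E} {b M : ℝ}
    (hM : 0 < M) (hb : M < b) (h : b * ‖x - x₀‖ ≤ M * ‖x‖) :
    ‖x - x₀‖ ≤ (b / M - 1)⁻¹ * ‖x₀‖ := by
  have hx : ‖x‖ ≤ ‖x - x₀‖ + ‖x₀‖ := norm_le_norm_sub_add x x₀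
  rw [div_sub_one hM.ne', inv_div, div_mul_eq_mul_div, le_div_iff₀ (sub_pos.2 hb)]
  linarith [mul_le_mul_of_nonneg_left hx hM.le]

lemma tendsto_inv_div_sub_one_mul_atTop {M : ℝ} (hM : 0 < M) (r : ℝ) :
    Tendsto (fun b : ℝ => (b / M - 1)⁻¹ * r) atTop (nhds 0) := by
  have h : Tendsto (fun b : ℝ => b / M - 1) atTop atTop :=
    tendsto_atTop_add_const_right _ (-1) (tendsto_id.atTop_div_const hM)
  simpa only [Pi.inv_apply, zero_mul] using h.inv_tendsto_atTop.mul_const r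

variable [NormedAddCommGroup E] [InnerProductSpace ℝ E]
  [NormedAddCommGroup F] [InnerProductSpace ℝ F]

lemma hasDerivAt_norm_add_smul_sq (u w : E) :
    HasDerivAt (fun t : ℝ => ‖u + t • w‖ ^ 2) (2 * ⟪u, w⟫_ℝ) 0 := by
  have hline : HasDerivAt (fun t : ℝ => u + t • w) w 0 := by
    simpa only [one_smul] using ((hasDerivAt_id' (0 : ℝ)).smul_const w).const_add u
  simpa only [zero_smul, add_zero] using hline.norm_sq

lemma inner_map_sub_add_eq_zero_of_isLocalMin {T : E →ₗ[ℝ] F} {y : F} {a b : ℝ} {x x₀ : E}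
    (h : IsLocalMin (fun z => ‖T z - y‖ ^ 2 + a * ‖z‖ ^ 2 + b * ‖z - x₀‖ ^ 2) x) (v : E) :
    ⟪T x - y, T v⟫_ℝ + a * ⟪x, v⟫_ℝ + b * ⟪x - x₀, v⟫_ℝ = 0 := by
  have hline : IsLocalMin (fun t : ℝ =>
      ‖(T x - y) + t • T v‖ ^ 2 + a * ‖x + t • v‖ ^ 2 + b * ‖(x - x₀) + t • v‖ ^ 2) 0 := by
    have hcont : Continuous fun t : ℝ => x + t • v := by fun_prop
    have hx : IsLocalMin (fun z => ‖T z - y‖ ^ 2 + a * ‖z‖ ^ 2 + b * ‖z - x₀‖ ^ 2)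
        (x + (0 : ℝ) • v) := by rwa [zero_smul, add_zero]
    simpa only [Function.comp_def, map_add, map_smul, add_sub_right_comm] using
      hx.comp_continuous (g := fun t : ℝ => x + t • v) hcont.continuousAt
  have hderiv := ((hasDerivAt_norm_add_smul_sq (T x - y) (T v)).add
    ((hasDerivAt_norm_add_smul_sq x v).const_mul a)).add
    ((hasDerivAt_norm_add_smul_sq (x - x₀) v).const_mul b)
  linarith [hline.hasDerivAt_eq_zero hderiv]

end Prox

section Frobenius

open scoped InnerProductSpace Matrix.Norms.Frobenius

section Norm

variable {m p : Type*} [Fintype m] [Fintype p]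

lemma frobSq_eq_norm_sq (A : Matrix m p ℝ) : frobSq A = ‖A‖ ^ 2 := by
  have h : 0 ≤ ∑ i, ∑ j, A i j ^ 2 := by positivity
  simp only [frobSq, frobenius_norm_def, ← Real.sqrt_eq_rpow, Real.rpow_two, Real.norm_eq_abs,
    sq_abs, Real.sq_sqrt h]

lemma frobNorm_eq_norm (A : Matrix m p ℝ) : frobNorm A = ‖A‖ := by
  rw [frobNorm, frobSq_eq_norm_sq, Real.sqrt_sq (norm_nonneg A)]

/-- The Frobenius inner product `⟪A, B⟫ = tr (A Bᵀ)` on real matrices, which induces Mathlib's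
Frobenius norm. Like that norm, it is activated only locally. -/
@[reducible]
def frobeniusInnerProductSpace : InnerProductSpace ℝ (Matrix m p ℝ) where
  inner A B := (A * Bᵀ).trace
  norm_sq_eq_re_inner A := by
    rw [← frobSq_eq_norm_sq]
    simp only [frobSq, trace, diag_apply, mul_apply, transpose_apply, sq, RCLike.re_to_real]
  conj_inner_symm A B := by
    rw [← trace_transpose, transpose_mul, transpose_transpose, conj_trivial]
  add_left A B C := by rw [Matrix.add_mul, trace_add]
  smul_left A B c := by rw [Matrix.smul_mul, trace_smul, smul_eq_mul, conj_trivial]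

end Norm

attribute [local instance] frobeniusInnerProductSpace

section Inner

variable {m p q : Type*} [Fintype m] [Fintype p] [Fintype q]

lemma frobenius_inner_eq_trace (A B : Matrix m p ℝ) : ⟪A, B⟫_ℝ = (A * Bᵀ).trace := rfl

lemma inner_mul_eq_inner_transpose_mul (A : Matrix m q ℝ) (B : Matrix q p ℝ)
    (C : Matrix m p ℝ) : ⟪A * B, C⟫_ℝ = ⟪B, Aᵀ * C⟫_ℝ := by
  rw [frobenius_inner_eq_trace, frobenius_inner_eq_trace, transpose_mul, transpose_transpose,
    Matrix.mul_assoc, trace_mul_comm, Matrix.mul_assoc]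

lemma inner_mul_eq_inner_mul_transpose (A : Matrix m q ℝ) (B : Matrix q p ℝ)
    (C : Matrix m p ℝ) : ⟪A * B, C⟫_ℝ = ⟪A, C * Bᵀ⟫_ℝ := by
  rw [frobenius_inner_eq_trace, frobenius_inner_eq_trace, transpose_mul, transpose_transpose,
    Matrix.mul_assoc]

lemma norm_mul_sq_of_mul_transpose_eq_smul_one [DecidableEq q] {Y : Matrix q p ℝ} {s : ℝ}
    (hY : Y * Yᵀ = s • 1) (A : Matrix m q ℝ) : ‖A * Y‖ ^ 2 = s * ‖A‖ ^ 2 := by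
  rw [← real_inner_self_eq_norm_sq, inner_mul_eq_inner_mul_transpose, Matrix.mul_assoc, hY,
    Matrix.mul_smul, Matrix.mul_one, real_inner_smul_right, real_inner_self_eq_norm_sq]

end Inner

section Ridge

lemma posDef_mul_transpose_add_smul_one {m p : Type*} [Finite m] [DecidableEq m] [Fintype p]
    (H : Matrix m p ℝ) {c : ℝ} (hc : 0 < c) : (H * Hᵀ + c • 1).PosDef := by
  have h : (H * Hᵀ).PosSemidef := by
    simpa only [conjTranspose_eq_transpose_of_trivial] using posSemidef_self_mul_conjTranspose H
  exact PosDef.posSemidef_add h (PosDef.one.smul hc)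

variable {m p q : Type*} [Fintype m] [DecidableEq m] [Fintype p]

/-- The ridge regression weights for features `H`, targets `Y` and penalty `c`: the minimizer of
`W ↦ ‖W H - Y‖² + c ‖W‖²` when `0 < c`. -/
def ridgeWeights (Y : Matrix q p ℝ) (c : ℝ) (H : Matrix m p ℝ) : Matrix q m ℝ :=
  Y * Hᵀ * (H * Hᵀ + c • 1)⁻¹

variable (Y : Matrix q p ℝ) {c : ℝ} (H : Matrix m p ℝ)

lemma residual_ridgeWeights_mul_transpose (hc : 0 < c) :
    (Y - ridgeWeights Y c H * H) * Hᵀ = c • ridgeWeights Y c H := by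
  have hunit : IsUnit (H * Hᵀ + c • 1).det :=
    (isUnit_iff_isUnit_det _).1 (posDef_mul_transpose_add_smul_one H hc).isUnit
  have hmul : ridgeWeights Y c H * (H * Hᵀ + c • 1) = Y * Hᵀ :=
    nonsing_inv_mul_cancel_right _ _ hunit
  rw [Matrix.sub_mul, ← hmul, Matrix.mul_add, Matrix.mul_smul, Matrix.mul_one, Matrix.mul_assoc,
    add_sub_cancel_left]

variable [Fintype q]

lemma isMinOn_univ_ridgeWeights (hc : 0 < c) :
    IsMinOn (fun W => ‖W * H - Y‖ ^ 2 + c * ‖W‖ ^ 2) Set.univ (ridgeWeights Y c H) := by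
  refine isMinOn_univ_iff.2 fun W => ?_
  set V := ridgeWeights Y c H with hV
  obtain ⟨D, rfl⟩ : ∃ D, W = V + D := ⟨W - V, (add_sub_cancel V W).symm⟩
  have hcross : ⟪V * H - Y, D * H⟫_ℝ = -(c * ⟪V, D⟫_ℝ) := by
    rw [real_inner_comm, inner_mul_eq_inner_mul_transpose, ← neg_sub Y, Matrix.neg_mul, hV,
      residual_ridgeWeights_mul_transpose Y H hc, inner_neg_right, real_inner_smul_right,
      real_inner_comm]
  rw [Matrix.add_mul, add_sub_right_comm, norm_add_sq_real, norm_add_sq_real, hcross]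
  linarith [sq_nonneg ‖D * H‖, mul_nonneg hc.le (sq_nonneg ‖D‖)]

lemma inner_transpose_ridgeWeights_mul_residual (hc : 0 < c) :
    ⟪(ridgeWeights Y c H)ᵀ * (Y - ridgeWeights Y c H * H), H⟫_ℝ
      = c * ‖ridgeWeights Y c H‖ ^ 2 := by
  rw [inner_mul_eq_inner_transpose_mul, transpose_transpose, real_inner_comm,
    inner_mul_eq_inner_mul_transpose, residual_ridgeWeights_mul_transpose Y H hc,
    real_inner_smul_right, real_inner_self_eq_norm_sq]

variable {Y}

lemma norm_sq_transpose_ridgeWeights_mul_residual_le [DecidableEq q] {s : ℝ}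
    (hY : Y * Yᵀ = s • 1) (hc : 0 < c) :
    ‖(ridgeWeights Y c H)ᵀ * (Y - ridgeWeights Y c H * H)‖ ^ 2
      ≤ s * ‖ridgeWeights Y c H‖ ^ 2 := by
  set V := ridgeWeights Y c H with hV
  have hsplit : Vᵀ * Y = Vᵀ * (Y - V * H) + Vᵀ * (V * H) := by
    rw [← Matrix.mul_add, sub_add_cancel]
  have hcross : ⟪Vᵀ * (Y - V * H), Vᵀ * (V * H)⟫_ℝ = c * ‖Vᵀ * V‖ ^ 2 := by
    rw [← Matrix.mul_assoc Vᵀ V, real_inner_comm, inner_mul_eq_inner_mul_transpose,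
      Matrix.mul_assoc, hV, residual_ridgeWeights_mul_transpose Y H hc, Matrix.mul_smul,
      real_inner_smul_right, real_inner_self_eq_norm_sq]
  rw [← frobenius_norm_transpose V, ← norm_mul_sq_of_mul_transpose_eq_smul_one hY, hsplit,
    norm_add_sq_real, hcross]
  linarith [sq_nonneg ‖Vᵀ * (V * H)‖, mul_nonneg hc.le (sq_nonneg ‖Vᵀ * V‖)]

lemma norm_transpose_ridgeWeights_mul_residual_le [DecidableEq q] {s : ℝ} (hs : 0 ≤ s)
    (hY : Y * Yᵀ = s • 1) (hc : 0 < c) :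
    ‖(ridgeWeights Y c H)ᵀ * (Y - ridgeWeights Y c H * H)‖ ≤ s / c * ‖H‖ := by
  have hsq := norm_sq_transpose_ridgeWeights_mul_residual_le H hY hc
  have hinner := inner_transpose_ridgeWeights_mul_residual Y H hc
  set V := ridgeWeights Y c H
  set G := Vᵀ * (Y - V * H)
  have hG : ‖G‖ * ‖G‖ ≤ ‖G‖ * (s / c * ‖H‖) :=
    calc ‖G‖ * ‖G‖ = ‖G‖ ^ 2 := (sq _).symm
      _ ≤ s * ‖V‖ ^ 2 := hsq
      _ = s / c * ⟪G, H⟫_ℝ := by rw [hinner]; field_simp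
      _ ≤ s / c * (‖G‖ * ‖H‖) := by gcongr; exact real_inner_le_norm G H
      _ = ‖G‖ * (s / c * ‖H‖) := by ring
  rcases (norm_nonneg G).eq_or_lt with hzero | hpos
  · rw [← hzero]; positivity
  · exact le_of_mul_le_mul_left hG hpos

end Ridge

section CentralPath

/-- The proximal objective `H ↦ L(H) + (β / (2Kn)) ‖H - H₀‖²` with step size `1/β`. -/
def proxObjective (lW lH β : ℝ) (H₀ H : Matrix (Fin d) (Fin K × Fin n) ℝ) : ℝ :=
  Lcp lW lH H + (β / (2 * (K : ℝ) * n)) * frobSq (H - H₀)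

lemma Wstar_eq_ridgeWeights (lW : ℝ) (H : Matrix (Fin d) (Fin K × Fin n) ℝ) :
    Wstar lW H = ridgeWeights (Ymat K n) (n * lW) H := rfl

lemma Ymat_mul_transpose (K n : ℕ) : Ymat K n * (Ymat K n)ᵀ = (n : ℝ) • 1 := by
  ext k l
  rcases eq_or_ne k l with rfl | h
  · simp [Ymat, mul_apply, Fintype.sum_prod_type]
  · simp [Ymat, mul_apply, Fintype.sum_prod_type, h, h.symm]

variable {lW lH β : ℝ} {H₀ Hm : Matrix (Fin d) (Fin K × Fin n) ℝ}

lemma two_mul_mul_proxObjective (hK : 0 < K) (hn : 0 < n)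
    (H : Matrix (Fin d) (Fin K × Fin n) ℝ) :
    2 * K * n * proxObjective lW lH β H₀ H =
      ‖Wstar lW H * H - Ymat K n‖ ^ 2 + n * lW * ‖Wstar lW H‖ ^ 2
        + lH * ‖H‖ ^ 2 + β * ‖H - H₀‖ ^ 2 := by
  simp only [proxObjective, Lcp, frobSq_eq_norm_sq]
  field_simp

lemma isLocalMin_surrogate_of_isLocalMin_proxObjective (hK : 0 < K) (hn : 0 < n) (hlW : 0 < lW)
    (hmin : IsLocalMin (proxObjective lW lH β H₀) Hm) :
    IsLocalMin (fun H => ‖Wstar lW Hm * H - Ymat K n‖ ^ 2 + lH * ‖H‖ ^ 2 + β * ‖H - H₀‖ ^ 2)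
      Hm := by
  have hc : 0 < n * lW := by positivity
  filter_upwards [hmin] with H hH
  have hscaled := mul_le_mul_of_nonneg_left hH (by positivity : (0 : ℝ) ≤ 2 * K * n)
  rw [two_mul_mul_proxObjective hK hn, two_mul_mul_proxObjective hK hn] at hscaled
  have hopt := isMinOn_univ_iff.1 (isMinOn_univ_ridgeWeights (Ymat K n) H hc) (Wstar lW Hm)
  rw [← Wstar_eq_ridgeWeights] at hopt
  linarith

lemma transpose_Wstar_mul_residual_eq_of_isLocalMin (hK : 0 < K) (hn : 0 < n) (hlW : 0 < lW)
    (hmin : IsLocalMin (proxObjective lW lH β H₀) Hm) :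
    (Wstar lW Hm)ᵀ * (Ymat K n - Wstar lW Hm * Hm) = lH • Hm + β • (Hm - H₀) := by
  refine ext_inner_right ℝ fun D => ?_
  have hstat := inner_map_sub_add_eq_zero_of_isLocalMin
    (T := mulLeftLinearMap (Fin K × Fin n) ℝ (Wstar lW Hm))
    (isLocalMin_surrogate_of_isLocalMin_proxObjective hK hn hlW hmin) D
  rw [mulLeftLinearMap_apply, mulLeftLinearMap_apply, ← neg_sub (Ymat K n), inner_neg_left,
    real_inner_comm, inner_mul_eq_inner_transpose_mul, real_inner_comm] at hstat
  rw [inner_add_left, real_inner_smul_left, real_inner_smul_left]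
  linarith

lemma frobNorm_sub_le_of_isLocalMin_proxObjective (hK : 0 < K) (hn : 0 < n) (hlW : 0 < lW)
    {M : ℝ} (hM : 1 / lW + |lH| ≤ M) (hβ : M < β)
    (hmin : IsLocalMin (proxObjective lW lH β H₀) Hm) :
    frobNorm (Hm - H₀) ≤ (β / M - 1)⁻¹ * frobNorm H₀ := by
  have hMpos : 0 < M := lt_of_lt_of_le (by positivity) hM
  have hgrad : ‖(Wstar lW Hm)ᵀ * (Ymat K n - Wstar lW Hm * Hm)‖ ≤ 1 / lW * ‖Hm‖ := by
    have h := norm_transpose_ridgeWeights_mul_residual_le Hm n.cast_nonneg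
      (Ymat_mul_transpose K n) (by positivity : 0 < n * lW)
    rwa [← Wstar_eq_ridgeWeights, div_mul_cancel_left₀ (by positivity), ← one_div] at h
  have hstat : β • (Hm - H₀)
      = (Wstar lW Hm)ᵀ * (Ymat K n - Wstar lW Hm * Hm) - lH • Hm := by
    rw [transpose_Wstar_mul_residual_eq_of_isLocalMin hK hn hlW hmin, add_sub_cancel_left]
  rw [frobNorm_eq_norm, frobNorm_eq_norm]
  refine norm_sub_le_inv_mul_of_mul_norm_sub_le hMpos hβ ?_
  calc β * ‖Hm - H₀‖ = ‖β • (Hm - H₀)‖ := (norm_smul_of_nonneg (hMpos.trans hβ).le _).symm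
    _ ≤ 1 / lW * ‖Hm‖ + |lH| * ‖Hm‖ := by
      rw [hstat, ← Real.norm_eq_abs, ← norm_smul]
      exact norm_sub_le_of_le hgrad le_rfl
    _ ≤ M * ‖Hm‖ := by rw [← add_mul]; gcongr

end CentralPath

end Frobenius

theorem proximal_minimizer_close_to_input_general
    (hK : 0 < K) (hn : 0 < n) {lW lH M : ℝ} (hlW : 0 < lW) (hM : 1 / lW + |lH| ≤ M)
    (H₀ : Matrix (Fin d) (Fin K × Fin n) ℝ)
    {β : ℝ} (hβ : M < β) {Hm : Matrix (Fin d) (Fin K × Fin n) ℝ}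
    (hmin : IsLocalMin (proxObjective lW lH β H₀) Hm)
    {Hfam : ℝ → Matrix (Fin d) (Fin K × Fin n) ℝ}
    (hfam : ∀ᶠ b in atTop, IsLocalMin (proxObjective lW lH b H₀) (Hfam b)) :
    frobNorm (Hm - H₀) ≤ (β / M - 1)⁻¹ * frobNorm H₀ ∧
      Tendsto (fun b => frobNorm (Hfam b - H₀)) atTop (nhds 0) := by
  have hMpos : 0 < M := lt_of_lt_of_le (by positivity) hM
  refine ⟨frobNorm_sub_le_of_isLocalMin_proxObjective hK hn hlW hM hβ hmin, ?_⟩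
  refine squeeze_zero' (.of_forall fun b => Real.sqrt_nonneg _) ?_
    (tendsto_inv_div_sub_one_mul_atTop hMpos (frobNorm H₀))
  filter_upwards [eventually_gt_atTop M, hfam] with b hb hloc
  exact frobNorm_sub_le_of_isLocalMin_proxObjective hK hn hlW hM hb hloc

/-- with `M = (1/(Kn))(3/λ_W + λ_H)`, for `β > KnM` any global minimizer
`H_{1/β}` of `H ↦ L(H) + (β/(2Kn))‖H − H₀‖_F²` satisfies
`‖H_{1/β} − H₀‖_F ≤ (β/(KnM) − 1)⁻¹ ‖H₀‖_F`; in particular, for any family of global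
minimizers, `H_{1/β} → H₀` as `β → ∞`. -/
theorem proximal_minimizer_close_to_input
    (K n d : ℕ) (hK : 0 < K) (hn : 0 < n) (hdK : K ≤ d)
    (lW lH : ℝ) (hlW : 0 < lW) (hlH : 0 ≤ lH)
    (H₀ : Matrix (Fin d) (Fin K × Fin n) ℝ)
    (β : ℝ) (hβ : (K : ℝ) * n * ((1 / ((K : ℝ) * n)) * (3 / lW + lH)) < β)
    (Hm : Matrix (Fin d) (Fin K × Fin n) ℝ)
    (hmin : ∀ H' : Matrix (Fin d) (Fin K × Fin n) ℝ,
      Lcp lW lH Hm + (β / (2 * (K : ℝ) * n)) * frobSq (Hm - H₀)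
        ≤ Lcp lW lH H' + (β / (2 * (K : ℝ) * n)) * frobSq (H' - H₀))
    (Hfam : ℝ → Matrix (Fin d) (Fin K × Fin n) ℝ)
    (hfam : ∀ β' : ℝ, (K : ℝ) * n * ((1 / ((K : ℝ) * n)) * (3 / lW + lH)) < β' →
      ∀ H' : Matrix (Fin d) (Fin K × Fin n) ℝ,
        Lcp lW lH (Hfam β') + (β' / (2 * (K : ℝ) * n)) * frobSq (Hfam β' - H₀)
          ≤ Lcp lW lH H' + (β' / (2 * (K : ℝ) * n)) * frobSq (H' - H₀)) :
    frobNorm (Hm - H₀)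
      ≤ (β / ((K : ℝ) * n * ((1 / ((K : ℝ) * n)) * (3 / lW + lH))) - 1)⁻¹ * frobNorm H₀ ∧
    Filter.Tendsto (fun β' => frobNorm (Hfam β' - H₀)) Filter.atTop (nhds 0) := by
  have hM : 1 / lW + |lH| ≤ (K : ℝ) * n * ((1 / ((K : ℝ) * n)) * (3 / lW + lH)) := by
    rw [← mul_assoc, mul_one_div_cancel (by positivity), one_mul, abs_of_nonneg hlH]
    gcongr
    norm_num
  exact proximal_minimizer_close_to_input_general hK hn hlW hM H₀ hβ (.of_forall hmin)
    ((eventually_gt_atTop _).mono fun b hb => .of_forall (hfam b hb))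

end
end
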